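/- For every two-dimensional subgroup Λ = ℤ(u,v) + ℤ(w,0) of ℤ×ℤ (with 0 ≤ u < w and v > 0), there exist a positive integer n and binary trees T, T' with n leaves such that the subgroup of ℤ×ℤ generated by { (ld_T(i)−ld_{T'}(i), rd_T(i)−rd_{T'}(i)) : 1 ≤ i ≤ n } equals Λ. -/

import Mathlib

/-- Binary trees: every internal vertex has exactly a left and a right child. -/
inductive BTree : Type where
  | leaf : BTree
  | node : BTree → BTree → BTree

namespace BTree

/-- Number of leaves. -/
def numLeaves : BTree → ℕ
  | leaf => 1
  | node l r => l.numLeaves + r.numLeaves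

/-- Addresses of the leaves in left-to-right order, as words over `{0,1}`;
`false` records a left step (0) and `true` a right step (1). -/
def addrs : BTree → List (List Bool)
  | leaf => [[]]
  | node l r => (l.addrs.map (fun w => false :: w)) ++ (r.addrs.map (fun w => true :: w))

/-- Address of the `i`-th leaf (0-indexed, left to right). -/
def addr (T : BTree) (i : ℕ) : List Bool := T.addrs.getD i []

/-- Left depth of the `i`-th leaf: number of left steps (0's) in its address. -/
def ld (T : BTree) (i : ℕ) : ℕ := (T.addr i).count false

/-- Right depth of the `i`-th leaf: number of right steps (1's) in its address. -/
def rd (T : BTree) (i : ℕ) : ℕ := (T.addr i).count true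

/-- Total depth of the `i`-th leaf. -/
def depth (T : BTree) (i : ℕ) : ℕ := (T.addr i).length

end BTree

/-!
Label the root of a tree by `p ∈ G`, and the left and right children of a vertex labelled `x` by
`x + a` and `x + b`. For `a = (1, 0)`, `b = (0, 1)` and `p = 0` the leaf labels are the pairs
`(ld, rd)`, so two trees whose leaf words agree modulo `Λ` have all their leaf differences in `Λ`.

Growing a tree rewrites one letter `x` of its leaf word to the two letters `x + a`, `x + b`. This
rewriting is confluent, so two words over `G ⧸ Λ` have a common expansion as soon as they have equal
products in every monoid equipped with `f : G ⧸ Λ → M` satisfying `f x = f (x + a) * f (x + b)`;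
and expansions of words over `G ⧸ Λ` lift to `G`. To realise `d ∈ Λ` as a leaf difference it thus
suffices to find two trees with a leaf each whose labels differ by `d`, such that the words to the
left, and to the right, of these leaves have equal products modulo `Λ`.

When `Λ` has finite index, `a` and `b` have finite order modulo `Λ` and a pair of left combs
realises `w • a`, while a zigzag and a comb realise `w • a + u • a + v • b`. Such differences
generate `Λ`, and placing finitely many pairs of trees side by side under new roots realises
finitely many differences at once.
-/

open Relation

universe u

section Words

variable {G : Type u} [Add G] {a b : G} {s t s' t' : List G}

/-- One step of the rewriting of words over `G` that expands a letter `x` to `x + a`, `x + b`: the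
effect on the word of leaf labels of growing two children at the leaf labelled `x`. -/
inductive ExpandStep (a b : G) : List G → List G → Prop
  | head (x : G) (s : List G) : ExpandStep a b (x :: s) ((x + a) :: (x + b) :: s)
  | cons (x : G) {s t : List G} : ExpandStep a b s t → ExpandStep a b (x :: s) (x :: t)

/-- The word `t` is obtained from `s` by finitely many expansions of letters. -/
abbrev Expands (a b : G) : List G → List G → Prop :=
  ReflTransGen (ExpandStep a b)

theorem ExpandStep.append_left (l : List G) (h : ExpandStep a b s t) :
    ExpandStep a b (l ++ s) (l ++ t) := by
  induction l with
  | nil => exact h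
  | cons x l ih => exact ih.cons x

theorem ExpandStep.append_right (r : List G) (h : ExpandStep a b s t) :
    ExpandStep a b (s ++ r) (t ++ r) := by
  induction h with
  | head x s => exact .head x (s ++ r)
  | cons x _ ih => exact ih.cons x

theorem ExpandStep.of_append (h : ExpandStep a b (s ++ s') t) :
    (∃ r, ExpandStep a b s r ∧ t = r ++ s') ∨ ∃ r, ExpandStep a b s' r ∧ t = s ++ r := by
  induction s generalizing t with
  | nil => exact .inr ⟨t, h, rfl⟩
  | cons x s ih =>
    cases h with
    | head => exact .inl ⟨_, .head x s, rfl⟩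
    | cons _ h =>
      obtain ⟨r, hr, rfl⟩ | ⟨r, hr, rfl⟩ := ih h
      · exact .inl ⟨x :: r, hr.cons x, rfl⟩
      · exact .inr ⟨r, hr, rfl⟩

theorem ExpandStep.diamond (hs : ExpandStep a b s t) (hs' : ExpandStep a b s t') :
    ∃ r, ReflGen (ExpandStep a b) t r ∧ ReflGen (ExpandStep a b) t' r := by
  have cons_lift {x : G} {s t : List G} (h : ReflGen (ExpandStep a b) s t) :
      ReflGen (ExpandStep a b) (x :: s) (x :: t) := by
    cases h with
    | refl => exact .refl
    | single h => exact .single (h.cons x)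
  induction hs generalizing t' with
  | head x s =>
    cases hs' with
    | head => exact ⟨_, .refl, .refl⟩
    | cons _ h => exact ⟨_, .single ((h.cons _).cons _), .single (.head x _)⟩
  | cons x h ih =>
    cases hs' with
    | head => exact ⟨_, .single (.head x _), .single ((h.cons _).cons _)⟩
    | cons _ h' =>
      obtain ⟨r, hr, hr'⟩ := ih h'
      exact ⟨x :: r, cons_lift hr, cons_lift hr'⟩

theorem expands_singleton (x : G) : Expands a b [x] [x + a, x + b] :=
  .single (.head x [])

theorem Expands.append_left (l : List G) (h : Expands a b s t) : Expands a b (l ++ s) (l ++ t) :=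
  h.lift (l ++ ·) fun _ _ => .append_left l

theorem Expands.append_right (r : List G) (h : Expands a b s t) : Expands a b (s ++ r) (t ++ r) :=
  h.lift (· ++ r) fun _ _ => .append_right r

theorem Expands.append (h : Expands a b s t) (h' : Expands a b s' t') :
    Expands a b (s ++ s') (t ++ t') :=
  (h.append_right s').trans (h'.append_left t)

theorem equivalence_join_expands (a b : G) : Equivalence (Join (Expands a b)) :=
  equivalence_join_reflTransGen fun _ _ _ h h' =>
    let ⟨r, hr, hr'⟩ := h.diamond h'
    ⟨r, hr, hr'.to_reflTransGen⟩

/-- The congruence on the free monoid over `G` relating words that have a common expansion. -/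
def expansionCon (a b : G) : Con (FreeMonoid G) where
  r s t := Join (Expands a b) s.toList t.toList
  iseqv := (equivalence_join_expands a b).comap FreeMonoid.toList
  mul' := fun ⟨c, hc, hc'⟩ ⟨d, hd, hd'⟩ => ⟨c ++ d, hc.append hd, hc'.append hd'⟩

/-- A map into a monoid that turns the expansion of a letter into an equation, so that the product
of its values along a word is unchanged by expansions. -/
def IsExpansive {M : Type*} [Mul M] (a b : G) (f : G → M) : Prop :=
  ∀ x, f x = f (x + a) * f (x + b)

theorem IsExpansive.prod_map_eq_of_expandStep {M : Type*} [Monoid M] {f : G → M}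
    (hf : IsExpansive a b f) (h : ExpandStep a b s t) : (s.map f).prod = (t.map f).prod := by
  induction h with
  | head x s => simp only [List.map_cons, List.prod_cons, hf x, mul_assoc]
  | cons x _ ih => simp only [List.map_cons, List.prod_cons, ih]

theorem IsExpansive.prod_map_eq {M : Type*} [Monoid M] {f : G → M} (hf : IsExpansive a b f)
    (h : Expands a b s t) : (s.map f).prod = (t.map f).prod := by
  induction h with
  | refl => rfl
  | tail _ hstep ih =>
    exact ih.trans (hf.prod_map_eq_of_expandStep hstep)

theorem join_expands_of_forall_prod_map_eq
    (h : ∀ (M : Type u) [Monoid M] (f : G → M), IsExpansive a b f →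
      (s.map f).prod = (t.map f).prod) :
    Join (Expands a b) s t := by
  let ι : G → (expansionCon a b).Quotient := fun x => (FreeMonoid.of x : FreeMonoid G)
  have hι : IsExpansive a b ι := fun x =>
    (expansionCon a b).eq.mpr ⟨[x + a, x + b], expands_singleton x, .refl⟩
  have prod_ι (l : List G) : (l.map ι).prod = (FreeMonoid.ofList l : FreeMonoid G) := by
    induction l with
    | nil => rfl
    | cons x l ih => rw [List.map_cons, List.prod_cons, ih]; rfl
  have heq := h _ ι hι
  rw [prod_ι, prod_ι] at heq
  exact (expansionCon a b).eq.mp heq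

theorem Expands.exists_lift {H F : Type*} [Add H] [FunLike F G H] [AddHomClass F G H] (φ : F)
    {r : List H} (h : Expands (φ a) (φ b) (s.map φ) r) : ∃ t, Expands a b s t ∧ t.map φ = r := by
  have step_lift {s : List G} {r : List H} (h : ExpandStep (φ a) (φ b) (s.map φ) r) :
      ∃ t, ExpandStep a b s t ∧ t.map φ = r := by
    induction s generalizing r with
    | nil => cases h
    | cons x s ih =>
      cases h with
      | head => exact ⟨_, .head x s, by simp only [List.map_cons, map_add]⟩
      | cons _ h =>
        obtain ⟨t, ht, rfl⟩ := ih h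
        exact ⟨x :: t, ht.cons x, rfl⟩
  induction h with
  | refl => exact ⟨s, .refl, rfl⟩
  | tail _ hstep ih =>
    obtain ⟨t, ht, rfl⟩ := ih
    obtain ⟨t', ht', rfl⟩ := step_lift hstep
    exact ⟨t', ht.tail ht', rfl⟩

/-- The labels of the leaves of a tree, from left to right, when the root is labelled `p` and the
left and right children of a vertex labelled `x` are labelled `x + a` and `x + b`. -/
def BTree.labels (a b : G) : G → BTree → List G
  | p, leaf => [p]
  | p, node l r => l.labels a b (p + a) ++ r.labels a b (p + b)

theorem BTree.exists_labels_eq_of_expandStep (T : BTree) {p : G}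
    (h : ExpandStep a b (T.labels a b p) s) : ∃ T' : BTree, T'.labels a b p = s := by
  induction T generalizing p s with
  | leaf =>
    cases h with
    | head => exact ⟨node leaf leaf, rfl⟩
    | cons _ h => cases h
  | node L R ihL ihR =>
    obtain ⟨r, hr, rfl⟩ | ⟨r, hr, rfl⟩ := h.of_append
    · obtain ⟨L', rfl⟩ := ihL hr
      exact ⟨node L' R, rfl⟩
    · obtain ⟨R', rfl⟩ := ihR hr
      exact ⟨node L R', rfl⟩

theorem Expands.exists_labels_eq {p : G} (h : Expands a b [p] s) :
    ∃ T : BTree, T.labels a b p = s := by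
  induction h with
  | refl => exact ⟨.leaf, rfl⟩
  | tail _ hstep ih =>
    obtain ⟨T, rfl⟩ := ih
    exact T.exists_labels_eq_of_expandStep hstep

end Words

section Spines

variable {G H M : Type*} [AddMonoid G] [AddMonoid H] [Monoid M] {a b : G}

/-- The labels, from left to right, of the right siblings met on the path that descends from a
vertex labelled `p` by `n` left steps. -/
def leftSpine (a b p : G) : ℕ → List G
  | 0 => []
  | n + 1 => (p + n • a + b) :: leftSpine a b p n

/-- The labels, from left to right, of the left siblings met on the path that descends from a
vertex labelled `p` by `n` right steps. -/
def rightSpine (a b p : G) : ℕ → List G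
  | 0 => []
  | n + 1 => rightSpine a b p n ++ [p + n • b + a]

theorem expands_leftSpine (p : G) (n : ℕ) :
    Expands a b [p] ((p + n • a) :: leftSpine a b p n) := by
  induction n with
  | zero => simpa only [leftSpine, zero_nsmul, add_zero] using .refl
  | succ n ih =>
    rw [leftSpine, succ_nsmul, ← add_assoc]
    exact ih.tail (.head _ _)

theorem expands_rightSpine (p : G) (n : ℕ) :
    Expands a b [p] (rightSpine a b p n ++ [p + n • b]) := by
  induction n with
  | zero => simpa only [rightSpine, zero_nsmul, add_zero] using .refl
  | succ n ih =>
    rw [rightSpine, succ_nsmul, ← add_assoc, List.append_assoc]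
    exact ih.trans ((expands_singleton _).append_left _)

theorem leftSpine_add (p : G) (m n : ℕ) :
    leftSpine a b p (m + n) = leftSpine a b (p + n • a) m ++ leftSpine a b p n := by
  induction m with
  | zero => simp only [leftSpine, zero_add, List.nil_append]
  | succ m ih =>
    rw [Nat.add_right_comm, leftSpine, leftSpine, ih, List.cons_append, add_comm m, add_nsmul,
      ← add_assoc p]

theorem leftSpine_succ' (p : G) (n : ℕ) :
    leftSpine a b p (n + 1) = leftSpine a b (p + a) n ++ [p + b] := by
  rw [leftSpine_add, one_nsmul, leftSpine, leftSpine, zero_nsmul, add_zero]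

theorem map_leftSpine (φ : G →+ H) (p : G) (n : ℕ) :
    (leftSpine a b p n).map φ = leftSpine (φ a) (φ b) (φ p) n := by
  induction n with
  | zero => rfl
  | succ n ih => simp only [leftSpine, List.map_cons, ih, map_add, map_nsmul]

theorem map_rightSpine (φ : G →+ H) (p : G) (n : ℕ) :
    (rightSpine a b p n).map φ = rightSpine (φ a) (φ b) (φ p) n := by
  induction n with
  | zero => rfl
  | succ n ih =>
    simp only [rightSpine, List.map_append, List.map_cons, List.map_nil, ih, map_add, map_nsmul]

/-- The labels, from left to right, of the vertices hanging to the right of the path that descends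
from a vertex labelled `x` by a left step, `v` right steps, `w` left steps, a right step and `n`
left steps. -/
def zigzagTail (a b x : G) (v w n : ℕ) : List G :=
  leftSpine a b (x + a + v • b + w • a + b) n ++ (leftSpine a b (x + a + v • b) w ++ [x + b])

theorem expands_zigzag (x : G) (v w n : ℕ) :
    Expands a b [x] ((rightSpine a b (x + a) v ++ [x + a + v • b + w • a + a]) ++
      (x + a + v • b + w • a + b + n • a) :: zigzagTail a b x v w n) := by
  have h₁ := expands_singleton (a := a) (b := b) x
  have h₂ := (expands_rightSpine (a := a) (b := b) (x + a) v).append_right [x + b]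
  have h₃ := expands_leftSpine (a := a) (b := b) (x + a + v • b) w
  have h₄ := expands_singleton (a := a) (b := b) (x + a + v • b + w • a)
  have h₅ := expands_leftSpine (a := a) (b := b) (x + a + v • b + w • a + b) n
  have h₄₅ := h₄.trans (h₅.append_left [_])
  have h₃₅ := h₃.trans (Expands.append_right (leftSpine a b (x + a + v • b) w) h₄₅)
  have h₂₅ := h₂.trans <|
    Expands.append_right [x + b] (Expands.append_left (rightSpine a b (x + a) v) h₃₅)
  simpa only [zigzagTail, List.append_assoc, List.cons_append, List.nil_append] using h₁.trans h₂₅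

theorem map_zigzagTail (φ : G →+ H) (x : G) (v w n : ℕ) :
    (zigzagTail a b x v w n).map φ = zigzagTail (φ a) (φ b) (φ x) v w n := by
  simp only [zigzagTail, List.map_append, map_leftSpine, List.map_cons, List.map_nil, map_add,
    map_nsmul]

namespace IsExpansive

variable {f : G → M}

theorem apply_eq_mul_leftSpine (hf : IsExpansive a b f) (x : G) (n : ℕ) :
    f x = f (x + n • a) * ((leftSpine a b x n).map f).prod := by
  simpa using hf.prod_map_eq (expands_leftSpine x n)

theorem apply_eq_rightSpine_mul (hf : IsExpansive a b f) (x : G) (n : ℕ) :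
    f x = ((rightSpine a b x n).map f).prod * f (x + n • b) := by
  simpa using hf.prod_map_eq (expands_rightSpine x n)

theorem mul_eq_self_add_nsmul (hf : IsExpansive a b f) (hb : IsOfFinAddOrder b) {x : G} {c : M}
    (h : f x * c = f x) (k : ℕ) : f (x + k • b) * c = f (x + k • b) := by
  obtain ⟨m, hm, hmb⟩ := isOfFinAddOrder_iff_nsmul_eq_zero.mp hb
  obtain ⟨m, rfl⟩ := Nat.exists_eq_succ_of_ne_zero hm.ne'
  have hx : x + k • b + (k * m) • b = x := by
    rw [add_assoc, ← add_nsmul, ← mul_one_add k, add_comm 1 m, mul_comm, mul_nsmul, hmb,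
      nsmul_zero, add_zero]
  rw [hf.apply_eq_rightSpine_mul (x + k • b) (k * m), hx, mul_assoc, h]

theorem leftSpine_succ_mul_eq_self (hf : IsExpansive a b f) (hb : IsOfFinAddOrder b) {x : G}
    {c : M} (h : f x * c = f x) (k n : ℕ) :
    ((leftSpine a b (x + k • b) (n + 1)).map f).prod * c =
      ((leftSpine a b (x + k • b) (n + 1)).map f).prod := by
  rw [leftSpine_succ', List.map_append, List.prod_append, List.map_singleton, List.prod_singleton,
    mul_assoc, add_assoc x _ b, ← succ_nsmul, hf.mul_eq_self_add_nsmul hb h]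

theorem leftSpine_mul_self (hf : IsExpansive a b f) (hb : IsOfFinAddOrder b) {n : ℕ}
    (hn : n • a = 0) (x : G) :
    ((leftSpine a b x n).map f).prod * ((leftSpine a b x n).map f).prod =
      ((leftSpine a b x n).map f).prod := by
  obtain _ | n := n
  · exact mul_one _
  · have hx := (hf.apply_eq_mul_leftSpine x (n + 1)).symm
    rw [hn, add_zero] at hx
    simpa only [zero_nsmul, add_zero] using hf.leftSpine_succ_mul_eq_self hb hx 0 n

end IsExpansive

end Spines

section Zigzag

variable {G M : Type*} [AddCommMonoid G] [Monoid M] {a b : G} {f : G → M} {u v w : ℕ}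

theorem zigzag_turn_eq (hw : (w + 1) • a = 0) (x : G) (v : ℕ) :
    x + a + v • b + w • a = x + v • b := by
  calc
    x + a + v • b + w • a = x + v • b + (w + 1) • a := by rw [succ_nsmul]; abel
    _ = x + v • b := by rw [hw, add_zero]

theorem zigzag_end_eq (hw : (w + 1) • a = 0) (huv : u • a + v • b = 0) (x : G) :
    x + a + v • b + w • a + b + u • a = x + b := by
  calc
    x + a + v • b + w • a + b + u • a = x + b + (u • a + v • b) := by
      rw [zigzag_turn_eq hw]; abel
    _ = x + b := by rw [huv, add_zero]

namespace IsExpansive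

theorem apply_eq_rightSpine_mul_zigzag (hf : IsExpansive a b f) (hw : (w + 1) • a = 0) (x : G)
    (v : ℕ) :
    f (x + a) = ((rightSpine a b (x + a) v ++ [x + a + v • b + w • a + a]).map f).prod := by
  rw [zigzag_turn_eq hw, add_right_comm x, hf.apply_eq_rightSpine_mul (x + a) v]
  simp only [List.map_append, List.prod_append, List.map_singleton, List.prod_singleton]

theorem apply_mul_zigzagTail (hf : IsExpansive a b f) (hw : (w + 1) • a = 0)
    (huv : u • a + v • b = 0) (x : G) :
    f x * ((zigzagTail a b x v w u).map f).prod = f x := by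
  have h := hf.prod_map_eq (expands_zigzag x v w u)
  rw [List.map_singleton, List.prod_singleton, List.map_append, List.prod_append,
    ← hf.apply_eq_rightSpine_mul_zigzag hw, List.map_cons, List.prod_cons, zigzag_end_eq hw huv,
    ← mul_assoc, ← hf x] at h
  exact h.symm

theorem zigzagTail_add_eq_leftSpine (hf : IsExpansive a b f) (hb : IsOfFinAddOrder b)
    (hw : (w + 1) • a = 0) (huv : u • a + v • b = 0) (x : G) :
    ((zigzagTail a b x v w (w + 1 + u)).map f).prod =
      ((leftSpine a b (x + b) (w + 1)).map f).prod := by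
  have hsplit : zigzagTail a b x v w (w + 1 + u) =
      leftSpine a b (x + b) (w + 1) ++ zigzagTail a b x v w u := by
    rw [zigzagTail, zigzagTail, leftSpine_add, zigzag_end_eq hw huv, List.append_assoc]
  rw [hsplit, List.map_append, List.prod_append]
  simpa only [one_nsmul] using
    hf.leftSpine_succ_mul_eq_self hb (hf.apply_mul_zigzagTail hw huv x) 1 w

end IsExpansive

end Zigzag

section Realization

variable {G H : Type*} [AddCommGroup G] [AddCommGroup H] {a b : G} {φ : G →+ H}

/-- The differences of the labels of corresponding leaves of two trees with roots labelled `p`. -/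
def leafDiffs (a b p : G) (T T' : BTree) : List G :=
  List.zipWith (· - ·) (T.labels a b p) (T'.labels a b p)

/-- Two trees have the same leaf labels modulo the kernel of `φ` when their roots are
labelled `p`. -/
def CongrLabels (a b : G) (φ : G →+ H) (p : G) (T T' : BTree) : Prop :=
  (T.labels a b p).map φ = (T'.labels a b p).map φ

/-- The element `d` is a leaf difference of two trees that have the same leaf labels modulo the
kernel of `φ`, whatever the label `p` of the roots. -/
def IsLeafDiff (a b : G) (φ : G →+ H) (d : G) : Prop :=
  ∀ p, ∃ T T', CongrLabels a b φ p T T' ∧ d ∈ leafDiffs a b p T T'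

theorem CongrLabels.length_eq {p : G} {T T' : BTree} (h : CongrLabels a b φ p T T') :
    (T.labels a b p).length = (T'.labels a b p).length := by
  simpa only [List.length_map] using congrArg List.length h

theorem CongrLabels.node {p : G} {L L' R R' : BTree} (hL : CongrLabels a b φ (p + a) L L')
    (hR : CongrLabels a b φ (p + b) R R') : CongrLabels a b φ p (.node L R) (.node L' R') := by
  unfold CongrLabels at *
  rw [BTree.labels, BTree.labels, List.map_append, List.map_append, hL, hR]

theorem CongrLabels.leafDiffs_node {p : G} {L L' : BTree} (hL : CongrLabels a b φ (p + a) L L')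
    (R R' : BTree) :
    leafDiffs a b p (.node L R) (.node L' R') =
      leafDiffs a b (p + a) L L' ++ leafDiffs a b (p + b) R R' :=
  List.zipWith_append hL.length_eq

theorem CongrLabels.map_eq_zero {p d : G} {T T' : BTree} (h : CongrLabels a b φ p T T')
    (hd : d ∈ leafDiffs a b p T T') : φ d = 0 := by
  have hmap : (leafDiffs a b p T T').map φ = (T'.labels a b p).map fun _ => 0 := by
    calc
      (leafDiffs a b p T T').map φ
          = List.zipWith (· - ·) ((T.labels a b p).map φ) ((T'.labels a b p).map φ) := by
        simp only [leafDiffs, List.map_zipWith, List.zipWith_map, map_sub]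
      _ = (T'.labels a b p).map fun _ => 0 := by
        rw [h, List.zipWith_self, List.map_map]
        simp only [Function.comp_def, sub_self]
  have hmem := List.mem_map_of_mem (f := φ) hd
  rw [hmap, List.mem_map] at hmem
  obtain ⟨-, -, hzero⟩ := hmem
  exact hzero.symm

theorem exists_forall_mem_leafDiffs {S : Set G} (hS : S.Finite)
    (h : ∀ d ∈ S, IsLeafDiff a b φ d) (p : G) :
    ∃ T T', CongrLabels a b φ p T T' ∧ ∀ d ∈ S, d ∈ leafDiffs a b p T T' := by
  induction S, hS using Set.Finite.induction_on generalizing p with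
  | empty => exact ⟨.leaf, .leaf, rfl, fun d hd => hd.elim⟩
  | @insert d S _ _ ih =>
    obtain ⟨L, L', hL, hd⟩ := h d (Set.mem_insert d S) (p + a)
    obtain ⟨R, R', hR, hS⟩ := ih (fun e he => h e (Set.mem_insert_of_mem d he)) (p + b)
    refine ⟨.node L R, .node L' R', hL.node hR, ?_⟩
    rw [hL.leafDiffs_node]
    rintro e (rfl | he)
    · exact List.mem_append_left _ hd
    · exact List.mem_append_right _ (hS e he)

theorem exists_sub_mem_leafDiffs {p g g' : G} {s t s' t' : List G}
    (h : Expands a b [p] (s ++ g :: t)) (h' : Expands a b [p] (s' ++ g' :: t'))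
    (hs : Join (Expands (φ a) (φ b)) (s.map φ) (s'.map φ))
    (ht : Join (Expands (φ a) (φ b)) (t.map φ) (t'.map φ)) (hg : φ g = φ g') :
    ∃ T T', CongrLabels a b φ p T T' ∧ g - g' ∈ leafDiffs a b p T T' := by
  obtain ⟨c, hsc, hsc'⟩ := hs
  obtain ⟨d, htd, htd'⟩ := ht
  obtain ⟨s₁, hs₁, rfl⟩ := hsc.exists_lift φ
  obtain ⟨s₁', hs₁', hc⟩ := hsc'.exists_lift φ
  obtain ⟨t₁, ht₁, rfl⟩ := htd.exists_lift φ
  obtain ⟨t₁', ht₁', hd⟩ := htd'.exists_lift φ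
  obtain ⟨T, hT⟩ := Expands.exists_labels_eq (h.trans (hs₁.append (ht₁.append_left [g])))
  obtain ⟨T', hT'⟩ := Expands.exists_labels_eq (h'.trans (hs₁'.append (ht₁'.append_left [g'])))
  have hlen : s₁.length = s₁'.length := by
    simpa only [List.length_map] using congrArg List.length hc.symm
  refine ⟨T, T', ?_, ?_⟩
  · simp only [CongrLabels, hT, hT', List.map_append, hc, hd, hg, List.map_cons]
  · rw [leafDiffs, hT, hT', List.zipWith_append hlen]
    exact List.mem_append_right _ List.mem_cons_self

theorem isLeafDiff_nsmul {w : ℕ} (hw : w • φ a = 0) (hb : IsOfFinAddOrder (φ b)) :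
    IsLeafDiff a b φ (w • a) := by
  intro p
  have hright : Join (Expands (φ a) (φ b)) ((leftSpine a b p (w + w)).map φ)
      ((leftSpine a b p w).map φ) := by
    refine join_expands_of_forall_prod_map_eq fun M _ f hf => ?_
    rw [map_leftSpine, map_leftSpine, leftSpine_add, hw, add_zero, List.map_append,
      List.prod_append]
    exact hf.leftSpine_mul_self hb hw _
  have hg : φ (p + (w + w) • a) = φ (p + w • a) := by
    simp only [map_add, map_nsmul, add_nsmul, hw, add_zero]
  have hsub : p + (w + w) • a - (p + w • a) = w • a := by
    rw [add_nsmul]; abel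
  rw [← hsub]
  exact exists_sub_mem_leafDiffs (s := []) (s' := []) (expands_leftSpine p (w + w))
    (expands_leftSpine p w) ((equivalence_join_expands _ _).refl _) hright hg

theorem isLeafDiff_add_nsmul_add_nsmul {u v w : ℕ} (hw : (w + 1) • φ a = 0)
    (hb : IsOfFinAddOrder (φ b)) (huv : u • φ a + v • φ b = 0) :
    IsLeafDiff a b φ ((w + 1) • a + (u • a + v • b)) := by
  intro p
  have hcomb : Expands a b [p]
      ([p + a] ++ (p + b + (w + 1) • a) :: leftSpine a b (p + b) (w + 1)) :=
    (expands_singleton p).trans ((expands_leftSpine (p + b) (w + 1)).append_left [p + a])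
  have hleft : Join (Expands (φ a) (φ b))
      ((rightSpine a b (p + a) v ++ [p + a + v • b + w • a + a]).map φ) ([p + a].map φ) := by
    refine join_expands_of_forall_prod_map_eq fun M _ f hf => ?_
    simpa [map_rightSpine] using (hf.apply_eq_rightSpine_mul_zigzag hw (φ p) v).symm
  have hright : Join (Expands (φ a) (φ b)) ((zigzagTail a b p v w (w + 1 + u)).map φ)
      ((leftSpine a b (p + b) (w + 1)).map φ) := by
    refine join_expands_of_forall_prod_map_eq fun M _ f hf => ?_
    rw [map_zigzagTail, map_leftSpine, map_add]
    exact hf.zigzagTail_add_eq_leftSpine hb hw huv (φ p)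
  have hsub : p + a + v • b + w • a + b + (w + 1 + u) • a - (p + b + (w + 1) • a) =
      (w + 1) • a + (u • a + v • b) := by
    simp only [add_nsmul, one_nsmul]; abel
  have hg : φ (p + a + v • b + w • a + b + (w + 1 + u) • a) = φ (p + b + (w + 1) • a) := by
    rw [← sub_eq_zero, ← map_sub, hsub]
    simp only [map_add, map_nsmul, hw, huv, add_zero]
  rw [← hsub]
  exact exists_sub_mem_leafDiffs (expands_zigzag p v w (w + 1 + u)) hcomb hleft hright hg

theorem nsmul_add_nsmul_mem_closure_isLeafDiff (ha : IsOfFinAddOrder (φ a))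
    (hb : IsOfFinAddOrder (φ b)) {u v : ℕ} (h : u • φ a + v • φ b = 0) :
    u • a + v • b ∈ AddSubgroup.closure {d | IsLeafDiff a b φ d} := by
  obtain ⟨w, hw⟩ : ∃ w, (w + 1) • φ a = 0 :=
    ⟨addOrderOf (φ a) - 1, by
      rw [Nat.sub_add_cancel ha.addOrderOf_pos, addOrderOf_nsmul_eq_zero]⟩
  refine (AddSubgroup.add_mem_cancel_left _ (x := (w + 1) • a) ?_).mp ?_
  · exact AddSubgroup.subset_closure (isLeafDiff_nsmul hw hb)
  · exact AddSubgroup.subset_closure (isLeafDiff_add_nsmul_add_nsmul hw hb h)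

theorem zsmul_add_zsmul_mem_closure_isLeafDiff (ha : IsOfFinAddOrder (φ a))
    (hb : IsOfFinAddOrder (φ b)) {x y : ℤ} (h : x • φ a + y • φ b = 0) :
    x • a + y • b ∈ AddSubgroup.closure {d | IsLeafDiff a b φ d} := by
  set m := addOrderOf (φ a)
  set n := addOrderOf (φ b)
  have hma : m • φ a = 0 := addOrderOf_nsmul_eq_zero (φ a)
  have hnb : n • φ b = 0 := addOrderOf_nsmul_eq_zero (φ b)
  obtain ⟨u, hu⟩ := Int.eq_ofNat_of_zero_le
    (Int.emod_nonneg x (Int.natCast_ne_zero.mpr ha.addOrderOf_pos.ne'))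
  obtain ⟨v, hv⟩ := Int.eq_ofNat_of_zero_le
    (Int.emod_nonneg y (Int.natCast_ne_zero.mpr hb.addOrderOf_pos.ne'))
  have hx : x • a = u • a + (x / m) • m • a := by
    conv_lhs => rw [← Int.emod_add_mul_ediv x m, hu]
    rw [add_zsmul, natCast_zsmul, mul_comm, mul_zsmul, natCast_zsmul]
  have hy : y • b = v • b + (y / n) • n • b := by
    conv_lhs => rw [← Int.emod_add_mul_ediv y n, hv]
    rw [add_zsmul, natCast_zsmul, mul_comm, mul_zsmul, natCast_zsmul]
  have huv : u • φ a + v • φ b = 0 := by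
    rw [← h, ← map_zsmul, ← map_zsmul, hx, hy]
    simp only [map_add, map_zsmul, map_nsmul, hma, hnb, zsmul_zero, add_zero]
  have hmem_a : m • a ∈ AddSubgroup.closure {d | IsLeafDiff a b φ d} :=
    AddSubgroup.subset_closure (isLeafDiff_nsmul hma hb)
  have hmem_b : n • b ∈ AddSubgroup.closure {d | IsLeafDiff a b φ d} := by
    simpa using nsmul_add_nsmul_mem_closure_isLeafDiff ha hb (u := 0) (v := n) (by simpa)
  rw [hx, hy, add_add_add_comm]
  exact add_mem (nsmul_add_nsmul_mem_closure_isLeafDiff ha hb huv)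
    (add_mem (zsmul_mem hmem_a _) (zsmul_mem hmem_b _))

theorem ker_le_closure_isLeafDiff (ha : IsOfFinAddOrder (φ a)) (hb : IsOfFinAddOrder (φ b))
    (hab : AddSubgroup.closure {a, b} = ⊤) :
    φ.ker ≤ AddSubgroup.closure {d | IsLeafDiff a b φ d} := by
  intro g hg
  obtain ⟨x, y, rfl⟩ := AddSubgroup.mem_closure_pair.mp (hab ▸ AddSubgroup.mem_top g)
  rw [AddMonoidHom.mem_ker, map_add, map_zsmul, map_zsmul] at hg
  exact zsmul_add_zsmul_mem_closure_isLeafDiff ha hb hg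

theorem exists_finset_subset_closure_eq [AddGroup.FG G] (s : Set G) :
    ∃ t : Finset G, ↑t ⊆ s ∧ AddSubgroup.closure (t : Set G) = .closure s := by
  have : Module.Finite ℤ G := Module.Finite.iff_addGroup_fg.mpr inferInstance
  obtain ⟨t, hts, ht⟩ := (Submodule.fg_span_iff_fg_span_finset_subset (R := ℤ) s).mp
    (IsNoetherian.noetherian _)
  refine ⟨t, hts, ?_⟩
  rw [← Submodule.span_int_eq_addSubgroupClosure, ← ht, Submodule.span_int_eq_addSubgroupClosure]

theorem exists_closure_leafDiffs_eq_ker (ha : IsOfFinAddOrder (φ a)) (hb : IsOfFinAddOrder (φ b))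
    (hab : AddSubgroup.closure {a, b} = ⊤) (p : G) :
    ∃ T T', CongrLabels a b φ p T T' ∧
      AddSubgroup.closure {d | d ∈ leafDiffs a b p T T'} = φ.ker := by
  have : AddGroup.FG G := AddGroup.fg_iff.mpr ⟨{a, b}, hab, Set.toFinite _⟩
  obtain ⟨S, hS, hclosure⟩ := exists_finset_subset_closure_eq {d | IsLeafDiff a b φ d}
  obtain ⟨T, T', hT, hmem⟩ := exists_forall_mem_leafDiffs S.finite_toSet hS p
  refine ⟨T, T', hT, le_antisymm ?_ ?_⟩
  · exact (AddSubgroup.closure_le _).mpr fun d hd => hT.map_eq_zero hd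
  · calc
      φ.ker ≤ AddSubgroup.closure {d | IsLeafDiff a b φ d} := ker_le_closure_isLeafDiff ha hb hab
      _ = AddSubgroup.closure S := hclosure.symm
      _ ≤ AddSubgroup.closure {d | d ∈ leafDiffs a b p T T'} := AddSubgroup.closure_mono hmem

end Realization

section Depths

namespace BTree

theorem length_addrs (T : BTree) : T.addrs.length = T.numLeaves := by
  induction T with
  | leaf => rfl
  | node L R hL hR => rw [addrs, numLeaves, List.length_append, List.length_map, List.length_map,
      hL, hR]

theorem numLeaves_pos (T : BTree) : 0 < T.numLeaves := by
  induction T with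
  | leaf => exact Nat.one_pos
  | node L R hL _ => exact Nat.add_pos_left hL _

theorem labels_eq_map_addrs (T : BTree) (p : ℤ × ℤ) :
    T.labels (1, 0) (0, 1) p =
      T.addrs.map fun w => p + ((w.count false : ℤ), (w.count true : ℤ)) := by
  induction T generalizing p with
  | leaf => simp [labels, addrs]
  | node L R hL hR =>
    simp only [labels, addrs, hL, hR, List.map_append, List.map_map]
    congr 1 <;> refine List.map_congr_left fun w _ => ?_ <;> ext <;> simp <;> ring

theorem labels_eq_map_range (T : BTree) :
    T.labels (1, 0) (0, 1) (0 : ℤ × ℤ) =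
      (List.range T.numLeaves).map fun i => ((T.ld i : ℤ), (T.rd i : ℤ)) := by
  rw [labels_eq_map_addrs, ← length_addrs]
  refine List.ext_getElem (by simp) fun i hi _ => ?_
  rw [List.length_map] at hi
  simp [ld, rd, addr, hi]

end BTree

theorem CongrLabels.numLeaves_eq {H : Type*} [AddCommGroup H] {φ : ℤ × ℤ →+ H} {T T' : BTree}
    (h : CongrLabels (1, 0) (0, 1) φ 0 T T') : T.numLeaves = T'.numLeaves := by
  simpa [BTree.labels_eq_map_range] using h.length_eq

theorem mem_leafDiffs_iff {T T' : BTree} (h : T'.numLeaves = T.numLeaves) {d : ℤ × ℤ} :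
    d ∈ leafDiffs (1, 0) (0, 1) 0 T T' ↔ ∃ i < T.numLeaves,
      d = ((T.ld i : ℤ) - (T'.ld i : ℤ), (T.rd i : ℤ) - (T'.rd i : ℤ)) := by
  rw [leafDiffs, BTree.labels_eq_map_range, BTree.labels_eq_map_range, h, List.zipWith_map,
    List.zipWith_self, List.mem_map]
  simp only [List.mem_range, Prod.mk_sub_mk, eq_comm]

end Depths

section Lattices

theorem closure_unit_vectors_eq_top :
    AddSubgroup.closure {((1, 0) : ℤ × ℤ), (0, 1)} = ⊤ := by
  refine eq_top_iff.mpr fun p _ => AddSubgroup.mem_closure_pair.mpr ⟨p.1, p.2, ?_⟩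
  ext <;> simp

theorem finiteIndex_closure_pair (u : ℤ) {v w : ℤ} (hv : v ≠ 0) (hw : w ≠ 0) :
    (AddSubgroup.closure {(u, v), (w, 0)}).FiniteIndex := by
  set Λ := AddSubgroup.closure {(u, v), (w, 0)}
  have hmem (p : ℤ × ℤ) : (v * w) • p ∈ Λ := by
    refine AddSubgroup.mem_closure_pair.mpr ⟨w * p.2, v * p.1 - u * p.2, ?_⟩
    ext <;> simp <;> ring
  have htorsion : IsAddTorsion ((ℤ × ℤ) ⧸ Λ) := by
    rintro ⟨p⟩
    exact isOfFinAddOrder_iff_zsmul_eq_zero.mpr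
      ⟨v * w, mul_ne_zero hv hw, (QuotientAddGroup.eq_zero_iff _).mpr (hmem p)⟩
  have := AddCommGroup.finite_of_fg_isAddTorsion _ htorsion
  exact AddSubgroup.finiteIndex_of_finite_quotient

end Lattices

theorem stmt16_general (Λ : AddSubgroup (ℤ × ℤ)) [Λ.FiniteIndex] :
    ∃ (n : ℕ) (T T' : BTree), 0 < n ∧ T.numLeaves = n ∧ T'.numLeaves = n ∧
      AddSubgroup.closure
          {p : ℤ × ℤ | ∃ i < n,
            p = ((T.ld i : ℤ) - (T'.ld i : ℤ), (T.rd i : ℤ) - (T'.rd i : ℤ))} = Λ := by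
  let φ := QuotientAddGroup.mk' Λ
  obtain ⟨T, T', hT, hclosure⟩ := exists_closure_leafDiffs_eq_ker (φ := φ) (p := 0)
    (isOfFinAddOrder_of_finite (φ (1, 0))) (isOfFinAddOrder_of_finite (φ (0, 1)))
    closure_unit_vectors_eq_top
  refine ⟨T.numLeaves, T, T', T.numLeaves_pos, rfl, hT.numLeaves_eq.symm, ?_⟩
  simpa only [mem_leafDiffs_iff hT.numLeaves_eq.symm, φ, QuotientAddGroup.ker_mk'] using hclosure

/-- Every two-dimensional parallelogram grid `ℤ(u,v) + ℤ(w,0)` (with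
`0 ≤ u < w`, `v > 0`) is treealisable: it equals `Λ_{T,T'}` for some binary
trees `T, T'` with the same number of leaves. -/
theorem stmt16 (u v w : ℤ) (hu : 0 ≤ u) (huw : u < w) (hv : 0 < v) :
    ∃ (n : ℕ) (T T' : BTree), 0 < n ∧ T.numLeaves = n ∧ T'.numLeaves = n ∧
      AddSubgroup.closure
          {p : ℤ × ℤ | ∃ i < n,
            p = ((T.ld i : ℤ) - (T'.ld i : ℤ), (T.rd i : ℤ) - (T'.rd i : ℤ))}
        = AddSubgroup.closure {(u, v), (w, 0)} := by
  have := finiteIndex_closure_pair u hv.ne' (hu.trans_lt huw).ne'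
  exact stmt16_general _
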